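/- For every fixed integer l ≥ 0, the quantity a(n,l)·(l+1)!/(l+1)^{l+n−1} tends to 1 as n → ∞; that is, a(n,l) is asymptotic to (l+1)^{l+n−1}/(l+1)! as n → ∞. -/

import Mathlib

/-!
For fixed `k` and `i`, `C(n,k,i)` grows at most polynomially in `n`, hence so does the coefficient
of `(k+1)^{k+n-1}/(k+1)!` in `a(n,l)`, a fixed polynomial in such constants. The term of index
`k < l` is therefore of order at most `n^d (k+1)^n` for some `d`, which is negligible against
`(l+1)^n`, while the term `k = l` has coefficient `1` and is exactly the asserted equivalent.
-/

open Finset Real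

/-- The constant `C(n,k,i)` from Aluffi–Marcolli–Nascimento. -/
noncomputable def Cnki (n k i : ℕ) : ℝ :=
  ((-1 : ℝ) ^ i * (2 * (k : ℝ) * i + n * i + k + n - 1) + (k : ℝ) - i) / (i * (i + 1))
    - (1 / ((i : ℝ) * (k + 1) ^ i)) * ∑ j ∈ Finset.range (k + n - 1), (j : ℝ) ^ i

/-- The finite set of `m`-tuples of positive integers summing to `N`. -/
def posTuples (m N : ℕ) : Finset (Fin m → ℕ) :=
  (Fintype.piFinset fun _ => Finset.Icc 1 N).filter fun f => ∑ j, f j = N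

/-- `a n l = rk H^{2l}(M̄_{0,n})`, via the Aluffi–Marcolli–Nascimento formula. -/
noncomputable def a (n l : ℕ) : ℝ :=
  ∑ k ∈ Finset.range (l + 1),
    ((k + 1 : ℝ) ^ (k + n - 1) / (Nat.factorial (k + 1) : ℝ)) *
      ∑ m ∈ Finset.range (l - k + 1),
        (1 / (Nat.factorial m : ℝ)) *
          ∑ f ∈ posTuples m (l - k), ∏ j, Cnki n k (f j)

open Asymptotics Filter

theorem sum_range_pow_le_pow_succ {R : Type*} [CommSemiring R] [PartialOrder R]
    [IsOrderedRing R] (m i : ℕ) : ∑ j ∈ range m, (j : R) ^ i ≤ (m : R) ^ (i + 1) := by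
  calc ∑ j ∈ range m, (j : R) ^ i
      ≤ ∑ _j ∈ range m, (m : R) ^ i := by
        gcongr with j hj
        exact (mem_range.1 hj).le
    _ = (m : R) ^ (i + 1) := by simp [pow_succ']

theorem pow_add_sub_one_isTheta {K : Type*} [NormedField K] {x : K} (hx : x ≠ 0) (k : ℕ) :
    (fun n : ℕ => x ^ (k + n - 1)) =Θ[atTop] fun n => x ^ n := by
  have hpow : (fun n : ℕ => x ^ (k + n - 1)) =ᶠ[atTop] fun n => x ^ k / x * x ^ n :=
    (eventually_ge_atTop 1).mono fun n hn => by
      dsimp only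
      rw [pow_sub₀ x hx (by omega), pow_add]
      ring
  exact hpow.isTheta.trans
    ((isTheta_const_mul_left (div_ne_zero (pow_ne_zero k hx) hx)).2 (isTheta_refl _ _))

/-- The subalgebra of sequences of at most polynomial growth, that is, of those `f : ℕ → A` with
`f n = O(n ^ d)` as `n → ∞` for some `d`. Being a subalgebra, it is closed under the finite sums
and products from which the coefficients of `a` are built. -/
def polynomialGrowth (𝕜 A : Type*) [NormedField 𝕜] [NormedRing A] [NormedAlgebra 𝕜 A] :
    Subalgebra 𝕜 (ℕ → A) where
  carrier := {f | ∃ d : ℕ, f =O[atTop] fun n => (n : ℝ) ^ d}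
  mul_mem' := by
    rintro f g ⟨d, hf⟩ ⟨e, hg⟩
    exact ⟨d + e, (hf.mul hg).congr_right fun n => (pow_add _ d e).symm⟩
  add_mem' := by
    rintro f g ⟨d, hf⟩ ⟨e, hg⟩
    have pow_isBigO {p q : ℕ} (hpq : p ≤ q) :
        (fun n : ℕ => (n : ℝ) ^ p) =O[atTop] fun n => (n : ℝ) ^ q :=
      IsBigO.pow_of_le_right
        ((eventually_ge_atTop 1).mono fun n hn => by simpa using hn) hpq
    exact ⟨max d e, (hf.trans (pow_isBigO (le_max_left d e))).add
      (hg.trans (pow_isBigO (le_max_right d e)))⟩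
  algebraMap_mem' c :=
    ⟨0, (isBigO_const_one ℝ (algebraMap 𝕜 A c) atTop).congr_right fun _ => (pow_zero _).symm⟩

namespace polynomialGrowth

variable {𝕜 A B : Type*} [NormedField 𝕜] [NormedRing A] [NormedAlgebra 𝕜 A]
  [NormedRing B] [NormedAlgebra 𝕜 B]

theorem mem_of_isBigO {f : ℕ → A} {g : ℕ → B} (hg : g ∈ polynomialGrowth 𝕜 B)
    (hfg : f =O[atTop] g) : f ∈ polynomialGrowth 𝕜 A := by
  obtain ⟨d, hd⟩ := hg
  exact ⟨d, hfg.trans hd⟩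

theorem natCast_mem : (fun n : ℕ => (n : A)) ∈ polynomialGrowth 𝕜 A :=
  ⟨1, .of_bound ‖(1 : A)‖ <| .of_forall fun n => by
    simpa [mul_comm] using Nat.norm_cast_le (α := A) n⟩

theorem mul_pow_isLittleO {f : ℕ → A} (hf : f ∈ polynomialGrowth 𝕜 A) {x : A} {y : ℝ}
    (hxy : ‖x‖ < y) : (fun n => f n * x ^ n) =o[atTop] fun n => y ^ n := by
  obtain ⟨d, hd⟩ := hf
  have hx : (fun n => x ^ n) =O[atTop] fun n => ‖x‖ ^ n :=
    .of_norm_eventuallyLE (eventually_norm_pow_le x)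
  exact (hd.mul hx).trans_isLittleO
    (isLittleO_pow_const_mul_const_pow_const_pow_of_norm_lt d (by rwa [norm_norm]))

end polynomialGrowth

theorem sum_range_pow_mem_polynomialGrowth (k i : ℕ) :
    (fun n => ∑ j ∈ range (k + n - 1), (j : ℝ) ^ i) ∈ polynomialGrowth ℝ ℝ := by
  have hshift : (fun n : ℕ => (k : ℝ) + n) ∈ polynomialGrowth ℝ ℝ :=
    add_mem (algebraMap_mem (polynomialGrowth ℝ ℝ) (k : ℝ)) polynomialGrowth.natCast_mem
  refine polynomialGrowth.mem_of_isBigO (pow_mem hshift (i + 1)) (.of_norm_le fun n => ?_)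
  rw [Real.norm_of_nonneg (by positivity)]
  calc ∑ j ∈ range (k + n - 1), (j : ℝ) ^ i
      ≤ ((k + n - 1 : ℕ) : ℝ) ^ (i + 1) := sum_range_pow_le_pow_succ _ i
    _ ≤ ((k : ℝ) + n) ^ (i + 1) := by
        gcongr
        exact_mod_cast Nat.sub_le (k + n) 1

theorem Cnki_mem_polynomialGrowth (k i : ℕ) :
    (fun n => Cnki n k i) ∈ polynomialGrowth ℝ ℝ := by
  have hC : (fun n => Cnki n k i) =
      ((-1 : ℝ) ^ i * (i + 1) / (i * (i + 1))) • (fun n : ℕ => (n : ℝ))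
        + algebraMap ℝ (ℕ → ℝ) (((-1) ^ i * (2 * k * i + k - 1) + k - i) / (i * (i + 1)))
        - (1 / ((i : ℝ) * (k + 1) ^ i)) • fun n => ∑ j ∈ range (k + n - 1), (j : ℝ) ^ i := by
    ext n
    simp only [Cnki, Pi.sub_apply, Pi.add_apply, Pi.smul_apply, Pi.algebraMap_apply,
      Algebra.algebraMap_self, RingHom.id_apply, smul_eq_mul]
    ring
  rw [hC]
  exact sub_mem
    (add_mem (Subalgebra.smul_mem _ polynomialGrowth.natCast_mem _) (algebraMap_mem _ _))
    (Subalgebra.smul_mem _ (sum_range_pow_mem_polynomialGrowth k i) _)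

/-- The coefficient of `t ^ N` in `exp (∑ i ≥ 1, c i * t ^ i)`; the inner double sum of `a n l` is
the case `c = C(n,k,·)`, `N = l - k`. The number `m` of factors is at most `N` because they are
indexed by tuples of positive integers with sum `N`. In positive characteristic `1 / m!` takes the
junk value `0` for large `m`, so this reading is limited to characteristic zero. -/
def expCoeff {K : Type*} [Field K] (c : ℕ → K) (N : ℕ) : K :=
  ∑ m ∈ range (N + 1), (1 / (m.factorial : K)) * ∑ f ∈ posTuples m N, ∏ j, c (f j)

theorem expCoeff_zero {K : Type*} [Field K] (c : ℕ → K) : expCoeff c 0 = 1 := by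
  simp [expCoeff, posTuples]

theorem expCoeff_mem_polynomialGrowth {K : Type*} [NormedField K] {c : ℕ → ℕ → K}
    (hc : ∀ i, (fun n => c n i) ∈ polynomialGrowth K K) (N : ℕ) :
    (fun n => expCoeff (c n) N) ∈ polynomialGrowth K K := by
  have hexp : (fun n => expCoeff (c n) N) = ∑ m ∈ range (N + 1),
      (1 / (m.factorial : K)) • ∑ f ∈ posTuples m N, ∏ j, fun n => c n (f j) := by
    ext n
    simp only [expCoeff, Finset.sum_apply, Pi.smul_apply, Finset.prod_apply, smul_eq_mul]
  rw [hexp]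
  refine sum_mem fun m _ => Subalgebra.smul_mem _ (sum_mem fun f _ => ?_) _
  exact prod_mem fun j _ => hc (f j)

/-- The asymptotic value `(k+1)^{k+n-1}/(k+1)!` of `a n k`, which is also the factor of
`expCoeff (Cnki n k) (l - k)` in every `a n l` with `k ≤ l`. -/
noncomputable def leadingTerm (n k : ℕ) : ℝ :=
  (k + 1 : ℝ) ^ (k + n - 1) / ((k + 1).factorial : ℝ)

theorem leadingTerm_pos (n k : ℕ) : 0 < leadingTerm n k := by
  unfold leadingTerm
  positivity

theorem leadingTerm_isTheta (k : ℕ) :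
    (leadingTerm · k) =Θ[atTop] fun n => (k + 1 : ℝ) ^ n := by
  simp only [leadingTerm, div_eq_inv_mul]
  exact (isTheta_const_mul_left (by positivity)).2 (pow_add_sub_one_isTheta (by positivity) k)

theorem leadingTerm_mul_isLittleO {k l : ℕ} (hkl : k < l) {f : ℕ → ℝ}
    (hf : f ∈ polynomialGrowth ℝ ℝ) :
    (fun n => leadingTerm n k * f n) =o[atTop] (leadingTerm · l) := by
  have hnorm : ‖(k + 1 : ℝ)‖ < l + 1 := by
    rw [Real.norm_of_nonneg (by positivity)]
    gcongr
  calc (fun n => leadingTerm n k * f n)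
      =O[atTop] fun n => (k + 1 : ℝ) ^ n * f n :=
        (leadingTerm_isTheta k).isBigO.mul (isBigO_refl _ _)
    _ = fun n => f n * (k + 1 : ℝ) ^ n := by simp only [mul_comm]
    _ =o[atTop] fun n => (l + 1 : ℝ) ^ n := polynomialGrowth.mul_pow_isLittleO hf hnorm
    _ =Θ[atTop] (leadingTerm · l) := (leadingTerm_isTheta l).symm

theorem a_eq_sum_leadingTerm_mul_expCoeff (n l : ℕ) :
    a n l = ∑ k ∈ range (l + 1), leadingTerm n k * expCoeff (Cnki n k) (l - k) :=
  rfl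

theorem a_isEquivalent_leadingTerm (l : ℕ) : (a · l) ~[atTop] (leadingTerm · l) := by
  have hlower : (fun n => ∑ k ∈ range l, leadingTerm n k * expCoeff (Cnki n k) (l - k))
      =o[atTop] (leadingTerm · l) :=
    .fun_sum fun k hk => leadingTerm_mul_isLittleO (mem_range.1 hk)
      (expCoeff_mem_polynomialGrowth (Cnki_mem_polynomialGrowth k) (l - k))
  refine hlower.congr_left fun n => ?_
  simp [a_eq_sum_leadingTerm_mul_expCoeff, sum_range_succ, expCoeff_zero]

/-- **Theorem (Aluffi–Chen–Marcolli asymptotic).** For every fixed `l ≥ 0`,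
`a(n,l) · (l+1)! / (l+1)^{l+n−1} → 1` as `n → ∞`, i.e.
`a(n,l) ~ (l+1)^{l+n−1}/(l+1)!`. -/
theorem stmt3 (l : ℕ) :
    Filter.Tendsto
      (fun n : ℕ =>
        a n l * (Nat.factorial (l + 1) : ℝ) / (l + 1 : ℝ) ^ (l + n - 1))
      Filter.atTop (nhds 1) := by
  have hne : ∀ᶠ n in atTop, leadingTerm n l ≠ 0 := .of_forall fun n => (leadingTerm_pos n l).ne'
  refine ((isEquivalent_iff_tendsto_one hne).1 (a_isEquivalent_leadingTerm l)).congr fun n => ?_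
  exact div_div_eq_mul_div _ _ _
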